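/- arXiv:1202.2277 — 3 statements merged into one kernel-verified Lean document; each statement's English description precedes it below -/
import Mathlib

section
/- Let F be a probability measure supported in (-∞,1] with finite moment generating function near 0, assume E(F) ≤ μ < 1 and that F is not the point mass at μ, and let ν* be the unique maximizer of ν ↦ L(ν;F,μ) over [0,1/(1−μ)]. If ∫ (1−μ)/(1−x) dF(x) ≤ 1, then ν* = 1/(1−μ) and ∫ 1/(1−(x−μ)ν*) dF(x) ≤ 1. Otherwise, ∫ (x−μ)/(1−(x−μ)ν*) dF(x) = 0 (i.e., the derivative of L(·;F,μ) vanishes at ν*) and ∫ 1/(1−(x−μ)ν*) dF(x) = 1. -/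
open MeasureTheory ProbabilityTheory Set Filter
open scoped ENNReal NNReal Classical BoundedContinuousFunction

noncomputable section

/-- Kullback–Leibler divergence `D(F‖G)` between measures on ℝ
(`+∞` unless `F ≪ G` and `log (dF/dG)` is `F`-integrable). -/
def KL (F G : Measure ℝ) : ℝ≥0∞ :=
  if F ≪ G ∧ Integrable (fun x => Real.log (F.rnDeriv G x).toReal) F
  then ENNReal.ofReal (∫ x, Real.log (F.rnDeriv G x).toReal ∂F) else ⊤

/-- `D_inf(F,μ;𝒜)`: infimum of `D(F‖G)` over probability measures `G` supported in
`(-∞,1]` with (finite) mean `E(G) > μ`.  (For `G` supported in `(-∞,1]` the mean is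
well defined in `[-∞,1]`, and `E(G) > μ` holds iff `G` has integrable identity with
`∫ x dG > μ`.) -/
def DinfSemi (F : Measure ℝ) (μ : ℝ) : ℝ≥0∞ :=
  ⨅ G ∈ {G : Measure ℝ | IsProbabilityMeasure G ∧ G (Set.Ioi 1) = 0 ∧
      Integrable (fun x : ℝ => x) G ∧ μ < ∫ x, x ∂G}, KL F G

/-- `D_inf(F,μ;𝒜_a)`: infimum of `D(F‖G)` over probability measures `G` supported in
`[a,1]` with mean `E(G) > μ`. -/
def DinfBdd (a : ℝ) (F : Measure ℝ) (μ : ℝ) : ℝ≥0∞ :=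
  ⨅ G ∈ {G : Measure ℝ | IsProbabilityMeasure G ∧ G (Set.Icc a 1) = 1 ∧
      μ < ∫ x, x ∂G}, KL F G

/-- `L(ν;F,μ) = ∫ log(1-(x-μ)ν) dF(x)`, as an extended real number in `[-∞,∞)`:
the value is `⊥ = -∞` when the integrand equals `-∞` on a non-`F`-null set or when
its (necessarily negative, for `F` supported in `(-∞,1]` with finite mean) part fails
to be integrable. -/
def LL (F : Measure ℝ) (μ ν : ℝ) : EReal :=
  if Integrable (fun x => Real.log (1 - (x - μ) * ν)) F ∧ F {x | 1 - (x - μ) * ν ≤ 0} = 0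
  then ((∫ x, Real.log (1 - (x - μ) * ν) ∂F : ℝ) : EReal)
  else ⊥

/-- `D̃_inf(F,μ) = sup_{0 ≤ ν ≤ 1/(1-μ)} L(ν;F,μ)`. -/
def Dtilde (F : Measure ℝ) (μ : ℝ) : EReal :=
  ⨆ ν ∈ Set.Icc (0 : ℝ) (1 - μ)⁻¹, LL F μ ν

/-- The moment generating function of `F` is finite in a neighborhood of the origin. -/
def MGFNearZero (F : Measure ℝ) : Prop :=
  ∃ ε > (0 : ℝ), ∀ l : ℝ, |l| < ε → Integrable (fun x => Real.exp (l * x)) F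

/-- Fenchel–Legendre transform `Λ*(x) = sup_λ {λx - log ∫ e^{λu} dF(u)}` of the
logarithmic moment generating function of `F`. -/
def Legendre (F : Measure ℝ) (x : ℝ) : EReal :=
  ⨆ l : ℝ, ((l * x : ℝ) : EReal) -
    ENNReal.log (∫⁻ y, ENNReal.ofReal (Real.exp (l * y)) ∂F)

/-- Empirical distribution `F̂_t = (1/t) ∑_{i<t} δ_{X_i}`. -/
def empMeas {Ω : Type*} [MeasurableSpace Ω] (X : ℕ → Ω → ℝ) (t : ℕ) (ω : Ω) : Measure ℝ :=
  (t : ℝ≥0∞)⁻¹ • ∑ i ∈ Finset.range t, Measure.dirac (X i ω)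

/-- Empirical mean `μ̂_t = (1/t) ∑_{i<t} X_i`. -/
def empMean {Ω : Type*} (X : ℕ → Ω → ℝ) (t : ℕ) (ω : Ω) : ℝ :=
  (∑ i ∈ Finset.range t, X i ω) / t

end

/-!
Write `w ν x = 1 - (x - μ) * ν` for the payoff of the bet `ν` and `D ν = ∫ (x - μ) / w ν x dF`
for minus the derivative of `L` at `ν`. Along a segment from a maximizer `ν'`, the inequality
`log u ≤ u - 1` and Fatou's lemma give `∫ w ν / w ν' dF ≤ 1` for every admissible `ν`. As `w` is
affine in `ν`, the integral equals `1 + (ν' - ν) * D ν'`, so this is the variational inequality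
`0 ≤ (ν - ν') * D ν'`, and `ν = 0` reads `∫ 1 / w ν' dF = 1 + ν' * D ν' ≤ 1`.

If `ν'` is not the right endpoint `b = 1 / (1 - μ)`, then `D ν' = 0`: in the interior by the
variational inequality, and at `ν' = 0` because `D 0 = E(F) - μ ≤ 0`. Since `D` is strictly
increasing unless `F` is the point mass at `μ`, this forces `0 < D b`, that is
`1 < ∫ 1 / w b dF = ∫ (1 - μ) / (1 - x) dF`.
-/

open scoped Topology

section LogOptimality

variable {Ω : Type*} {mΩ : MeasurableSpace Ω} {P : Measure Ω} {a c : Ω → ℝ} {t : ℝ}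

lemma integrable_div_of_mul_le [IsFiniteMeasure P] {f g : Ω → ℝ} {k : ℝ} (hk : 0 < k)
    (hf : AEMeasurable f P) (hg : AEMeasurable g P) (hf0 : ∀ᵐ x ∂P, 0 ≤ f x)
    (hfg : ∀ᵐ x ∂P, k * f x ≤ g x) : Integrable (fun x => f x / g x) P := by
  refine Integrable.of_bound (hf.div hg).aestronglyMeasurable k⁻¹ ?_
  filter_upwards [hf0, hfg] with x hx0 hx
  have hg0 : 0 ≤ g x := (by positivity : 0 ≤ k * f x).trans hx
  rw [Real.norm_of_nonneg (by positivity)]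
  refine div_le_of_le_mul₀ hg0 (by positivity) ?_
  rwa [le_inv_mul_iff₀ hk]

lemma integrable_log_convexComb [IsFiniteMeasure P] (ha : Integrable a P) (hc : Integrable c P)
    (ha0 : ∀ᵐ x ∂P, 0 < a x) (hc0 : ∀ᵐ x ∂P, 0 ≤ c x)
    (hlog : Integrable (fun x => Real.log (a x)) P) (ht : t ∈ Ioo 0 1) :
    Integrable (fun x => Real.log ((1 - t) * a x + t * c x)) P := by
  have hw : Integrable (fun x => (1 - t) * a x + t * c x) P :=
    (ha.const_mul _).add (hc.const_mul _)
  have ht1 : 0 < 1 - t := sub_pos.2 ht.2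
  refine integrable_of_le_of_le hw.aemeasurable.log.aestronglyMeasurable ?_ ?_
    ((integrable_const (Real.log (1 - t))).add hlog) (hw.sub (integrable_const 1))
  · filter_upwards [ha0, hc0] with x hax hcx
    have htc : 0 ≤ t * c x := mul_nonneg ht.1.le hcx
    calc Real.log (1 - t) + Real.log (a x) = Real.log ((1 - t) * a x) :=
          (Real.log_mul ht1.ne' hax.ne').symm
      _ ≤ Real.log ((1 - t) * a x + t * c x) :=
          Real.log_le_log (by positivity) (le_add_of_nonneg_right htc)
  · filter_upwards [ha0, hc0] with x hax hcx
    have htc : 0 ≤ t * c x := mul_nonneg ht.1.le hcx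
    exact Real.log_le_sub_one_of_pos (by positivity)

lemma one_le_integral_div_of_integral_log_le [IsProbabilityMeasure P] {f g : Ω → ℝ}
    (hf0 : ∀ᵐ x ∂P, 0 < f x) (hg0 : ∀ᵐ x ∂P, 0 < g x)
    (hf : Integrable (fun x => Real.log (f x)) P) (hg : Integrable (fun x => Real.log (g x)) P)
    (hfg : Integrable (fun x => f x / g x) P)
    (hle : ∫ x, Real.log (g x) ∂P ≤ ∫ x, Real.log (f x) ∂P) :
    1 ≤ ∫ x, f x / g x ∂P := by
  have h : ∫ x, (Real.log (f x) - Real.log (g x)) ∂P ≤ ∫ x, (f x / g x - 1) ∂P := by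
    refine integral_mono_ae (hf.sub hg) (hfg.sub (integrable_const 1)) ?_
    filter_upwards [hf0, hg0] with x hfx hgx
    rw [← Real.log_div hfx.ne' hgx.ne']
    exact Real.log_le_sub_one_of_pos (by positivity)
  rw [integral_sub hf hg, integral_sub hfg (integrable_const 1), integral_const,
    probReal_univ, one_smul] at h
  linarith

lemma integral_div_convexComb_le_one [IsProbabilityMeasure P]
    (ha : Integrable a P) (hc : Integrable c P)
    (ha0 : ∀ᵐ x ∂P, 0 < a x) (hc0 : ∀ᵐ x ∂P, 0 ≤ c x)
    (hlog : Integrable (fun x => Real.log (a x)) P) (ht : t ∈ Ioo 0 1)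
    (hle : ∫ x, Real.log ((1 - t) * a x + t * c x) ∂P ≤ ∫ x, Real.log (a x) ∂P) :
    Integrable (fun x => c x / ((1 - t) * a x + t * c x)) P ∧
      ∫ x, c x / ((1 - t) * a x + t * c x) ∂P ≤ 1 := by
  set w : Ω → ℝ := fun x => (1 - t) * a x + t * c x
  have ht0 : 0 < t := ht.1
  have ht1 : 0 < 1 - t := sub_pos.2 ht.2
  have hw0 : ∀ᵐ x ∂P, 0 < w x := by
    filter_upwards [ha0, hc0] with x hax hcx
    positivity
  have hwm : AEMeasurable w P := ((ha.const_mul _).add (hc.const_mul _)).aemeasurable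
  have hlogw : Integrable (fun x => Real.log (w x)) P :=
    integrable_log_convexComb ha hc ha0 hc0 hlog ht
  have haw : Integrable (fun x => a x / w x) P := by
    refine integrable_div_of_mul_le ht1 ha.aemeasurable hwm (ha0.mono fun _ => le_of_lt) ?_
    filter_upwards [hc0] with x hcx using le_add_of_nonneg_right (by positivity)
  have hcw : Integrable (fun x => c x / w x) P := by
    refine integrable_div_of_mul_le ht0 hc.aemeasurable hwm hc0 ?_
    filter_upwards [ha0] with x hax using le_add_of_nonneg_left (by positivity)
  have one_le_integral_aw : 1 ≤ ∫ x, a x / w x ∂P :=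
    one_le_integral_div_of_integral_log_le ha0 hw0 hlog hlogw haw hle
  have integral_add_eq_one : (1 - t) * ∫ x, a x / w x ∂P + t * ∫ x, c x / w x ∂P = 1 := by
    rw [← integral_const_mul, ← integral_const_mul,
      ← integral_add (haw.const_mul _) (hcw.const_mul _)]
    have h : ∀ᵐ x ∂P, (1 - t) * (a x / w x) + t * (c x / w x) = 1 := by
      filter_upwards [hw0] with x hwx
      rw [mul_div_assoc', mul_div_assoc', ← add_div, div_self hwx.ne']
    rw [integral_congr_ae h, integral_const, probReal_univ, one_smul]
  exact ⟨hcw, by nlinarith⟩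

/- The ratios `c / ((1 - t) * a + t * c)` are integrable by construction, while integrability of
their limit `c / a` is part of the conclusion; hence Fatou and the lower Lebesgue integral. -/
lemma lintegral_div_le_one_of_forall_integral_log_le [IsProbabilityMeasure P]
    (ha : Integrable a P) (hc : Integrable c P)
    (ha0 : ∀ᵐ x ∂P, 0 < a x) (hc0 : ∀ᵐ x ∂P, 0 ≤ c x)
    (hlog : Integrable (fun x => Real.log (a x)) P)
    (hopt : ∀ t ∈ Ioo (0 : ℝ) 1,
      ∫ x, Real.log ((1 - t) * a x + t * c x) ∂P ≤ ∫ x, Real.log (a x) ∂P) :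
    ∫⁻ x, ENNReal.ofReal (c x / a x) ∂P ≤ 1 := by
  set r : ℝ → Ω → ℝ := fun t x => c x / ((1 - t) * a x + t * c x) with hr
  have lintegral_r_le : ∀ t ∈ Ioo (0 : ℝ) 1, ∫⁻ x, ENNReal.ofReal (r t x) ∂P ≤ 1 := by
    intro t ht
    obtain ⟨hint, hle⟩ :=
      integral_div_convexComb_le_one ha hc ha0 hc0 hlog ht (hopt t ht)
    have hr0 : 0 ≤ᵐ[P] r t := by
      filter_upwards [ha0, hc0] with x hax hcx
      have ht0 : 0 < t := ht.1
      have ht1 : 0 < 1 - t := sub_pos.2 ht.2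
      simp only [hr, Pi.zero_apply]
      positivity
    rwa [← ofReal_integral_eq_lintegral_ofReal hint hr0, ENNReal.ofReal_le_one]
  have tendsto_r : ∀ᵐ x ∂P, Tendsto (fun t => r t x) (𝓝[>] 0) (𝓝 (c x / a x)) := by
    filter_upwards [ha0] with x hax
    have hcont : ContinuousAt (fun t => r t x) 0 :=
      ContinuousAt.div (by fun_prop) (by fun_prop) (by simpa using hax.ne')
    have hlim := hcont.tendsto.mono_left (nhdsWithin_le_nhds (s := Ioi 0))
    simpa only [hr, sub_zero, one_mul, zero_mul, add_zero] using hlim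
  calc ∫⁻ x, ENNReal.ofReal (c x / a x) ∂P
      = ∫⁻ x, liminf (fun t => ENNReal.ofReal (r t x)) (𝓝[>] 0) ∂P :=
        lintegral_congr_ae <| tendsto_r.mono fun x hx => (ENNReal.tendsto_ofReal hx).liminf_eq.symm
    _ ≤ liminf (fun t => ∫⁻ x, ENNReal.ofReal (r t x) ∂P) (𝓝[>] 0) :=
        lintegral_liminf_le' fun t => (hc.aemeasurable.div
          ((ha.aemeasurable.const_mul _).add (hc.aemeasurable.const_mul _))).ennreal_ofReal
    _ ≤ 1 := liminf_le_of_frequently_le' <| Eventually.frequently <|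
        Eventually.mono (Ioo_mem_nhdsGT one_pos) lintegral_r_le

end LogOptimality

section LIntegralInv

variable {Ω : Type*} {mΩ : MeasurableSpace Ω} {P : Measure Ω} {f : Ω → ℝ}

lemma ae_pos_of_lintegral_inv_ofReal_ne_top (hf : AEMeasurable f P)
    (h : ∫⁻ x, (ENNReal.ofReal (f x))⁻¹ ∂P ≠ ∞) : ∀ᵐ x ∂P, 0 < f x := by
  filter_upwards [ae_lt_top' hf.ennreal_ofReal.inv h] with x hx
  exact ENNReal.ofReal_pos.1 (ENNReal.inv_lt_top.1 hx)

lemma lintegral_inv_ofReal (hf0 : ∀ᵐ x ∂P, 0 < f x) :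
    ∫⁻ x, (ENNReal.ofReal (f x))⁻¹ ∂P = ∫⁻ x, ENNReal.ofReal (f x)⁻¹ ∂P :=
  lintegral_congr_ae <| hf0.mono fun _ hx => (ENNReal.ofReal_inv_of_pos hx).symm

lemma integrable_inv_of_lintegral_inv_ofReal_ne_top (hf : AEMeasurable f P)
    (h : ∫⁻ x, (ENNReal.ofReal (f x))⁻¹ ∂P ≠ ∞) : Integrable (fun x => (f x)⁻¹) P := by
  have hf0 := ae_pos_of_lintegral_inv_ofReal_ne_top hf h
  rw [lintegral_inv_ofReal hf0] at h
  exact (lintegral_ofReal_ne_top_iff_integrable hf.inv.aestronglyMeasurable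
    (hf0.mono fun _ hx => (inv_pos.2 hx).le)).1 h

end LIntegralInv

lemma eq_dirac_of_ae_eq {α : Type*} [MeasurableSpace α] [MeasurableSingletonClass α]
    {P : Measure α} [IsProbabilityMeasure P] {a : α} (h : ∀ᵐ x ∂P, x = a) :
    P = Measure.dirac a := by
  have hsmul : P = P {a} • Measure.dirac a := by
    simpa using Measure.ae_mem_finset_iff (s := {a}) (μ := P) |>.1 (by simpa using h)
  have hone : P {a} = 1 := (mem_ae_iff_prob_eq_one (measurableSet_singleton a)).1 h
  rwa [hone, one_smul] at hsmul

lemma MGFNearZero.integrable_id {F : Measure ℝ} (h : MGFNearZero F) :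
    Integrable (fun x => x) F := by
  obtain ⟨ε, hε, hint⟩ := h
  refine integrable_of_mem_interior_integrableExpSet (mem_interior_iff_mem_nhds.2 ?_)
  exact Metric.mem_nhds_iff.2 ⟨ε, hε, fun l hl => hint l (by simpa using hl)⟩

/-- The payoff `1 - (x - μ) * ν` on the outcome `x` of a bet of size `ν` against the mean `μ`,
starting from unit capital; `LL F μ ν` is its expected logarithm. -/
def wealth (μ ν x : ℝ) : ℝ := 1 - (x - μ) * ν

/-- Minus the formal derivative of `ν ↦ L(ν;F,μ)`, obtained by differentiating under the integral.
The sign makes it increasing in `ν`. -/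
noncomputable def negDerivLL (F : Measure ℝ) (μ ν : ℝ) : ℝ := ∫ x, (x - μ) / wealth μ ν x ∂F

section Wealth

variable {F : Measure ℝ} {μ ν ν₁ ν₂ x : ℝ}

@[simp]
lemma wealth_zero : wealth μ 0 x = 1 := by simp [wealth]

lemma measurable_wealth : Measurable (wealth μ ν) := by unfold wealth; fun_prop

lemma convexComb_wealth (t : ℝ) :
    (1 - t) * wealth μ ν₁ x + t * wealth μ ν₂ x = wealth μ ((1 - t) * ν₁ + t * ν₂) x := by
  simp only [wealth]; ring

lemma wealth_div_wealth (h : wealth μ ν₁ x ≠ 0) :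
    wealth μ ν₂ x / wealth μ ν₁ x = 1 + (ν₁ - ν₂) * ((x - μ) / wealth μ ν₁ x) := by
  field_simp
  simp only [wealth]; ring

lemma wealth_nonneg (hμ : μ < 1) (hν : ν ∈ Icc 0 (1 - μ)⁻¹) (hx : x ≤ 1) : 0 ≤ wealth μ ν x := by
  have hμ' : 0 < 1 - μ := sub_pos.2 hμ
  have h : (x - μ) * ν ≤ 1 :=
    calc (x - μ) * ν ≤ (1 - μ) * ν := by gcongr; exact hν.1
      _ ≤ (1 - μ) * (1 - μ)⁻¹ := by gcongr; exact hν.2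
      _ = 1 := mul_inv_cancel₀ hμ'.ne'
  exact sub_nonneg.2 h

lemma ae_wealth_nonneg (hsupp : F (Ioi 1) = 0) (hμ : μ < 1) (hν : ν ∈ Icc 0 (1 - μ)⁻¹) :
    ∀ᵐ x ∂F, 0 ≤ wealth μ ν x := by
  have hx1 : ∀ᵐ x ∂F, x ≤ 1 := by simpa only [ae_iff, not_le] using! hsupp
  exact hx1.mono fun x => wealth_nonneg hμ hν

lemma inv_ofReal_wealth_right_endpoint (hμ : μ < 1) :
    (ENNReal.ofReal (wealth μ (1 - μ)⁻¹ x))⁻¹ =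
      ENNReal.ofReal (1 - μ) / ENNReal.ofReal (1 - x) := by
  have hμ' : 0 < 1 - μ := sub_pos.2 hμ
  have hw : wealth μ (1 - μ)⁻¹ x = (1 - x) / (1 - μ) := by
    simp only [wealth]; field_simp; ring
  rw [hw, ENNReal.ofReal_div_of_pos hμ', ENNReal.inv_div (.inl ENNReal.ofReal_ne_top)
    (.inl (ENNReal.ofReal_pos.2 hμ').ne')]

lemma integrable_wealth [IsFiniteMeasure F] (hid : Integrable (fun x => x) F) :
    Integrable (wealth μ ν) F :=
  (integrable_const 1).sub ((hid.sub (integrable_const μ)).mul_const ν)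

lemma integrable_sub_div_wealth [IsFiniteMeasure F] (hid : Integrable (fun x => x) F)
    (hfin : ∫⁻ x, (ENNReal.ofReal (wealth μ ν x))⁻¹ ∂F ≠ ∞) :
    Integrable (fun x => (x - μ) / wealth μ ν x) F := by
  rcases eq_or_ne ν 0 with rfl | hν
  · simpa only [wealth_zero, div_one] using! hid.sub (integrable_const μ)
  · have hpos := ae_pos_of_lintegral_inv_ofReal_ne_top measurable_wealth.aemeasurable hfin
    have hinv := integrable_inv_of_lintegral_inv_ofReal_ne_top measurable_wealth.aemeasurable hfin
    refine ((hinv.sub (integrable_const 1)).const_mul ν⁻¹).congr ?_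
    filter_upwards [hpos] with x hx
    have h := wealth_div_wealth (ν₂ := 0) hx.ne'
    simp only [wealth_zero, one_div, sub_zero] at h
    simp only [Pi.sub_apply, h, add_sub_cancel_left, inv_mul_cancel_left₀ hν]

lemma integral_wealth_div_wealth [IsProbabilityMeasure F] (hid : Integrable (fun x => x) F)
    (hfin : ∫⁻ x, (ENNReal.ofReal (wealth μ ν₁ x))⁻¹ ∂F ≠ ∞) :
    Integrable (fun x => wealth μ ν₂ x / wealth μ ν₁ x) F ∧
      ∫ x, wealth μ ν₂ x / wealth μ ν₁ x ∂F = 1 + (ν₁ - ν₂) * negDerivLL F μ ν₁ := by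
  have hpos := ae_pos_of_lintegral_inv_ofReal_ne_top measurable_wealth.aemeasurable hfin
  have hslope := (integrable_sub_div_wealth hid hfin).const_mul (ν₁ - ν₂)
  have hcongr := hpos.mono fun x hx => wealth_div_wealth (ν₂ := ν₂) hx.ne'
  refine ⟨((integrable_const 1).add hslope).congr (EventuallyEq.symm hcongr), ?_⟩
  rw [integral_congr_ae hcongr, integral_add (integrable_const 1) hslope, integral_const,
    probReal_univ, one_smul, integral_const_mul, negDerivLL]

lemma lintegral_wealth_div_wealth [IsProbabilityMeasure F] (hid : Integrable (fun x => x) F)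
    (hfin : ∫⁻ x, (ENNReal.ofReal (wealth μ ν₁ x))⁻¹ ∂F ≠ ∞)
    (hnonneg : ∀ᵐ x ∂F, 0 ≤ wealth μ ν₂ x) :
    ∫⁻ x, ENNReal.ofReal (wealth μ ν₂ x / wealth μ ν₁ x) ∂F =
      ENNReal.ofReal (1 + (ν₁ - ν₂) * negDerivLL F μ ν₁) := by
  have hpos := ae_pos_of_lintegral_inv_ofReal_ne_top measurable_wealth.aemeasurable hfin
  obtain ⟨hint, hintegral⟩ := integral_wealth_div_wealth (ν₂ := ν₂) hid hfin
  have hdiv : 0 ≤ᵐ[F] fun x => wealth μ ν₂ x / wealth μ ν₁ x := by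
    filter_upwards [hpos, hnonneg] with x h₁ h₂ using div_nonneg h₂ h₁.le
  rw [← hintegral, ofReal_integral_eq_lintegral_ofReal hint hdiv]

lemma lintegral_inv_wealth [IsProbabilityMeasure F] (hid : Integrable (fun x => x) F)
    (hfin : ∫⁻ x, (ENNReal.ofReal (wealth μ ν x))⁻¹ ∂F ≠ ∞) :
    ∫⁻ x, (ENNReal.ofReal (wealth μ ν x))⁻¹ ∂F = ENNReal.ofReal (1 + ν * negDerivLL F μ ν) := by
  have hpos := ae_pos_of_lintegral_inv_ofReal_ne_top measurable_wealth.aemeasurable hfin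
  simpa only [lintegral_inv_ofReal hpos, wealth_zero, one_div, sub_zero] using
    lintegral_wealth_div_wealth (ν₂ := 0) hid hfin (.of_forall fun _ => by simp)

lemma negDerivLL_zero [IsProbabilityMeasure F] (hid : Integrable (fun x => x) F) :
    negDerivLL F μ 0 = ∫ x, x ∂F - μ := by
  simp only [negDerivLL, wealth_zero, div_one]
  rw [integral_sub hid (integrable_const μ), integral_const, probReal_univ, one_smul]

lemma sub_div_wealth_sub_sub_div_wealth (h₁ : wealth μ ν₁ x ≠ 0) (h₂ : wealth μ ν₂ x ≠ 0) :
    (x - μ) / wealth μ ν₂ x - (x - μ) / wealth μ ν₁ x =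
      (ν₂ - ν₁) * (x - μ) ^ 2 / (wealth μ ν₁ x * wealth μ ν₂ x) := by
  field_simp
  simp only [wealth]; ring

lemma negDerivLL_lt_negDerivLL [IsProbabilityMeasure F] (hne : F ≠ Measure.dirac μ)
    (hid : Integrable (fun x => x) F) (hν : ν₁ < ν₂)
    (hfin₁ : ∫⁻ x, (ENNReal.ofReal (wealth μ ν₁ x))⁻¹ ∂F ≠ ∞)
    (hfin₂ : ∫⁻ x, (ENNReal.ofReal (wealth μ ν₂ x))⁻¹ ∂F ≠ ∞) :
    negDerivLL F μ ν₁ < negDerivLL F μ ν₂ := by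
  have hpos₁ := ae_pos_of_lintegral_inv_ofReal_ne_top measurable_wealth.aemeasurable hfin₁
  have hpos₂ := ae_pos_of_lintegral_inv_ofReal_ne_top measurable_wealth.aemeasurable hfin₂
  have hint₁ := integrable_sub_div_wealth hid hfin₁
  have hint₂ := integrable_sub_div_wealth hid hfin₂
  have hν' : 0 < ν₂ - ν₁ := sub_pos.2 hν
  have hle : ∀ᵐ x ∂F, (x - μ) / wealth μ ν₁ x ≤ (x - μ) / wealth μ ν₂ x := by
    filter_upwards [hpos₁, hpos₂] with x h₁ h₂
    rw [← sub_nonneg, sub_div_wealth_sub_sub_div_wealth h₁.ne' h₂.ne']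
    positivity
  refine (integral_mono_ae hint₁ hint₂ hle).lt_of_ne fun heq => hne (eq_dirac_of_ae_eq ?_)
  filter_upwards [(integral_eq_iff_of_ae_le hint₁ hint₂ hle).1 heq, hpos₁, hpos₂]
    with x hx h₁ h₂
  have hzero := sub_div_wealth_sub_sub_div_wealth h₁.ne' h₂.ne'
  rw [hx, sub_self] at hzero
  simpa [h₁.ne', h₂.ne', hν'.ne', sub_eq_zero] using hzero.symm

end Wealth

section Maximizer

variable {F : Measure ℝ} {μ ν ν' : ℝ}

lemma LL_eq_integral (hpos : ∀ᵐ x ∂F, 0 < wealth μ ν x)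
    (hlog : Integrable (fun x => Real.log (wealth μ ν x)) F) :
    LL F μ ν = ((∫ x, Real.log (wealth μ ν x) ∂F : ℝ) : EReal) :=
  if_pos ⟨hlog, by simpa only [ae_iff, not_lt] using! hpos⟩

lemma ae_pos_and_integrable_log_of_LL_ne_bot (h : LL F μ ν ≠ ⊥) :
    (∀ᵐ x ∂F, 0 < wealth μ ν x) ∧ Integrable (fun x => Real.log (wealth μ ν x)) F := by
  by_contra hcon
  refine h (if_neg fun hif => hcon ⟨?_, hif.1⟩)
  simpa only [ae_iff, not_lt] using! hif.2

lemma LL_zero : LL F μ 0 = 0 := by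
  rw [LL_eq_integral] <;> simp

lemma LL_ne_bot_of_isMaxOn (hμ : μ < 1) (hmax : IsMaxOn (LL F μ) (Icc 0 (1 - μ)⁻¹) ν') :
    LL F μ ν' ≠ ⊥ := by
  have h0 : LL F μ 0 ≤ LL F μ ν' := hmax ⟨le_rfl, (inv_pos.2 (sub_pos.2 hμ)).le⟩
  rw [LL_zero] at h0
  exact (EReal.bot_lt_zero.trans_le h0).ne'

variable [IsProbabilityMeasure F] (hsupp : F (Ioi 1) = 0) (hid : Integrable (fun x => x) F)
  (hμ : μ < 1) (hmem : ν' ∈ Icc 0 (1 - μ)⁻¹) (hmax : IsMaxOn (LL F μ) (Icc 0 (1 - μ)⁻¹) ν')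

include hsupp hid hμ hmem hmax

lemma lintegral_wealth_div_wealth_le_one_of_isMaxOn (hν : ν ∈ Icc 0 (1 - μ)⁻¹) :
    ∫⁻ x, ENNReal.ofReal (wealth μ ν x / wealth μ ν' x) ∂F ≤ 1 := by
  obtain ⟨hpos', hlog'⟩ := ae_pos_and_integrable_log_of_LL_ne_bot (LL_ne_bot_of_isMaxOn hμ hmax)
  have hnonneg := ae_wealth_nonneg hsupp hμ hν
  refine lintegral_div_le_one_of_forall_integral_log_le (integrable_wealth hid)
    (integrable_wealth hid) hpos' hnonneg hlog' fun t ht => ?_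
  have hlog := integrable_log_convexComb (integrable_wealth hid) (integrable_wealth hid)
    hpos' hnonneg hlog' ht
  have hpos : ∀ᵐ x ∂F, 0 < (1 - t) * wealth μ ν' x + t * wealth μ ν x := by
    filter_upwards [hpos', hnonneg] with x hx' hx
    exact add_pos_of_pos_of_nonneg (mul_pos (sub_pos.2 ht.2) hx') (mul_nonneg ht.1.le hx)
  have hle : LL F μ ((1 - t) * ν' + t * ν) ≤ LL F μ ν' :=
    hmax (convex_Icc 0 (1 - μ)⁻¹ hmem hν (sub_pos.2 ht.2).le ht.1.le (sub_add_cancel 1 t))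
  simp only [convexComb_wealth] at hlog hpos ⊢
  rwa [LL_eq_integral hpos hlog, LL_eq_integral hpos' hlog', EReal.coe_le_coe_iff] at hle

lemma lintegral_inv_wealth_le_one_of_isMaxOn :
    ∫⁻ x, (ENNReal.ofReal (wealth μ ν' x))⁻¹ ∂F ≤ 1 := by
  have hpos := (ae_pos_and_integrable_log_of_LL_ne_bot (LL_ne_bot_of_isMaxOn hμ hmax)).1
  have h0 : (0 : ℝ) ∈ Icc 0 (1 - μ)⁻¹ := ⟨le_rfl, (inv_pos.2 (sub_pos.2 hμ)).le⟩
  simpa only [lintegral_inv_ofReal hpos, wealth_zero, one_div] using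
    lintegral_wealth_div_wealth_le_one_of_isMaxOn hsupp hid hμ hmem hmax h0

lemma sub_mul_negDerivLL_nonneg_of_isMaxOn (hν : ν ∈ Icc 0 (1 - μ)⁻¹) :
    0 ≤ (ν - ν') * negDerivLL F μ ν' := by
  have hfin : ∫⁻ x, (ENNReal.ofReal (wealth μ ν' x))⁻¹ ∂F ≠ ∞ :=
    ne_top_of_le_ne_top ENNReal.one_ne_top
      (lintegral_inv_wealth_le_one_of_isMaxOn hsupp hid hμ hmem hmax)
  have hle := lintegral_wealth_div_wealth_le_one_of_isMaxOn hsupp hid hμ hmem hmax hν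
  rw [lintegral_wealth_div_wealth hid hfin (ae_wealth_nonneg hsupp hμ hν),
    ENNReal.ofReal_le_one] at hle
  linarith

lemma negDerivLL_eq_zero_of_isMaxOn (hEF : ∫ x, x ∂F ≤ μ) (hlt : ν' < (1 - μ)⁻¹) :
    negDerivLL F μ ν' = 0 := by
  have hvar : ∀ ν ∈ Icc 0 (1 - μ)⁻¹, 0 ≤ (ν - ν') * negDerivLL F μ ν' := fun ν hν =>
    sub_mul_negDerivLL_nonneg_of_isMaxOn hsupp hid hμ hmem hmax hν
  have hpos : 0 < (1 - μ)⁻¹ := inv_pos.2 (sub_pos.2 hμ)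
  refine le_antisymm ?_ (nonneg_of_mul_nonneg_right (hvar _ ⟨hpos.le, le_rfl⟩) (sub_pos.2 hlt))
  rcases hmem.1.eq_or_lt with rfl | hν'
  · rw [negDerivLL_zero hid]
    exact sub_nonpos.2 hEF
  · have h := hvar 0 ⟨le_rfl, hpos.le⟩
    exact nonpos_of_mul_nonneg_right h (sub_neg.2 hν')

end Maximizer

theorem stmt6_general (F : Measure ℝ) [IsProbabilityMeasure F] (hsupp : F (Ioi 1) = 0)
    (hid : Integrable (fun x => x) F) (μ : ℝ) (hEF : ∫ x, x ∂F ≤ μ) (hμ : μ < 1)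
    (hne : F ≠ Measure.dirac μ) (ν' : ℝ) (hmem : ν' ∈ Icc 0 (1 - μ)⁻¹)
    (hmax : IsMaxOn (LL F μ) (Icc 0 (1 - μ)⁻¹) ν') :
    ((∫⁻ x, ENNReal.ofReal (1 - μ) / ENNReal.ofReal (1 - x) ∂F ≤ 1) →
      ν' = (1 - μ)⁻¹ ∧ ∫⁻ x, (ENNReal.ofReal (1 - (x - μ) * ν'))⁻¹ ∂F ≤ 1) ∧
    ((1 < ∫⁻ x, ENNReal.ofReal (1 - μ) / ENNReal.ofReal (1 - x) ∂F) →
      (∫ x, (x - μ) / (1 - (x - μ) * ν') ∂F = 0) ∧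
      ∫⁻ x, (ENNReal.ofReal (1 - (x - μ) * ν'))⁻¹ ∂F = 1) := by
  have hinv : ∫⁻ x, (ENNReal.ofReal (wealth μ ν' x))⁻¹ ∂F ≤ 1 :=
    lintegral_inv_wealth_le_one_of_isMaxOn hsupp hid hμ hmem hmax
  have hfin := ne_top_of_le_ne_top ENNReal.one_ne_top hinv
  have hzero : ν' ≠ (1 - μ)⁻¹ → negDerivLL F μ ν' = 0 := fun hν =>
    negDerivLL_eq_zero_of_isMaxOn hsupp hid hμ hmem hmax hEF (hmem.2.lt_of_ne hν)
  simp only [← inv_ofReal_wealth_right_endpoint hμ]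
  refine ⟨fun hle => ⟨?_, hinv⟩, fun hgt => ?_⟩
  · by_contra hν
    have hfin_end := ne_top_of_le_ne_top ENNReal.one_ne_top hle
    have hlt : 0 < negDerivLL F μ (1 - μ)⁻¹ := by
      simpa only [hzero hν] using
        negDerivLL_lt_negDerivLL hne hid (hmem.2.lt_of_ne hν) hfin hfin_end
    rw [lintegral_inv_wealth hid hfin_end, ENNReal.ofReal_le_one] at hle
    linarith [mul_pos (inv_pos.2 (sub_pos.2 hμ)) hlt]
  · have hν : ν' ≠ (1 - μ)⁻¹ := by
      rintro rfl
      exact hgt.not_ge hinv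
    refine ⟨hzero hν, ?_⟩
    change ∫⁻ x, (ENNReal.ofReal (wealth μ ν' x))⁻¹ ∂F = 1
    rw [lintegral_inv_wealth hid hfin, hzero hν, mul_zero, add_zero, ENNReal.ofReal_one]

/-- (Lemma `lem_integrable`.) Characterization of the unique
maximizer `ν*` of `ν ↦ L(ν;F,μ)` on `[0,1/(1-μ)]`: if `∫ (1-μ)/(1-x) dF ≤ 1` then
`ν* = 1/(1-μ)` and `∫ 1/(1-(x-μ)ν*) dF ≤ 1`; otherwise `L'(ν*;F,μ) = 0`
(i.e. `∫ (x-μ)/(1-(x-μ)ν*) dF = 0`) and `∫ 1/(1-(x-μ)ν*) dF = 1`. -/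
theorem stmt6 (F : Measure ℝ) [IsProbabilityMeasure F] (hsupp : F (Set.Ioi 1) = 0)
    (hmgf : MGFNearZero F) (μ : ℝ) (hEF : ∫ x, x ∂F ≤ μ) (hμ : μ < 1)
    (hne : F ≠ Measure.dirac μ)
    (ν' : ℝ) (hmem : ν' ∈ Set.Icc (0 : ℝ) (1 - μ)⁻¹)
    (hmax : ∀ ν ∈ Set.Icc (0 : ℝ) (1 - μ)⁻¹, LL F μ ν ≤ LL F μ ν')
    (huniq : ∀ ν'' ∈ Set.Icc (0 : ℝ) (1 - μ)⁻¹,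
      (∀ ν ∈ Set.Icc (0 : ℝ) (1 - μ)⁻¹, LL F μ ν ≤ LL F μ ν'') → ν'' = ν') :
    ((∫⁻ x, ENNReal.ofReal (1 - μ) / ENNReal.ofReal (1 - x) ∂F ≤ 1) →
      ν' = (1 - μ)⁻¹ ∧ ∫⁻ x, (ENNReal.ofReal (1 - (x - μ) * ν'))⁻¹ ∂F ≤ 1) ∧
    ((1 < ∫⁻ x, ENNReal.ofReal (1 - μ) / ENNReal.ofReal (1 - x) ∂F) →
      (∫ x, (x - μ) / (1 - (x - μ) * ν') ∂F = 0) ∧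
      ∫⁻ x, (ENNReal.ofReal (1 - (x - μ) * ν'))⁻¹ ∂F = 1) :=
  stmt6_general F hsupp hmgf.integrable_id μ hEF hμ hne ν' hmem hmax
end

section
/- Let a < 1 be a real number and let μ < 1. Then the map F ↦ D_inf(F,μ;𝒜_a) is continuous on the set of probability measures supported in [a,1], with respect to the topology of weak convergence of probability measures (equivalently, the topology induced by the Lévy metric). -/
open MeasureTheory ProbabilityTheory Set Filter
open scoped ENNReal NNReal Classical BoundedContinuousFunction

/-! By convex duality, `D_inf(F, μ; 𝒜_a)` should be the maximum over `0 ≤ ν ≤ 1/(1 - μ)` of the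
concave function `L(ν; F, μ) = ∫ log (1 - (x - μ)ν) dF(x)`. That each `L(ν; F, μ)` is a lower bound
is Gibbs' inequality. At the right end point the logarithm is singular at `x = 1`, so we only
maximise over `ν ≤ T` with `T < 1/(1 - μ)`; there the integrand is continuous and bounded, hence
the truncated maximum is weakly continuous in `F`.

The truncation costs little, uniformly in `F`. If `ν` is a maximiser over `[0, T]`, give `F` the
density `c / (1 - (x - μ)ν)` and put the missing mass at `1`. The first-order condition at `ν` makes
the mean of this measure `G` exceed `μ` as soon as `c < (1 - μ)T`, and `D(F‖G)` is at most
`L(ν; F, μ) - log c`. Since `c` can be taken arbitrarily close to `1`, `D_inf` is a uniform limit of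
weakly continuous functions. -/

open InformationTheory Topology

section IntegralOnCompact

variable {X : Type*} [TopologicalSpace X] [MeasurableSpace X] [OpensMeasurableSpace X] {K : Set X}

lemma integrable_of_continuousOn_of_ae_mem {E : Type*} [NormedAddCommGroup E] [T2Space X]
    {F : Measure X} [IsFiniteMeasureOnCompacts F] (hK : IsCompact K) (hF : ∀ᵐ x ∂F, x ∈ K)
    {f : X → E} (hf : ContinuousOn f K) : Integrable f F := by
  have h := hf.integrableOn_compact (μ := F) hK
  rwa [IntegrableOn, Measure.restrict_eq_self_of_ae_mem hF] at h

-- Near `(F₀, y₀)`, replace `f y` by a Tietze extension of `f y₀` restricted to `K`: this costs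
-- little, uniformly in `F`, and weak convergence applies to the extension.
theorem continuousOn_integral_of_isCompact [T4Space X] {Y : Type*} [TopologicalSpace Y]
    {s : Set Y} (hK : IsCompact K) {f : Y → X → ℝ}
    (hf : ContinuousOn (Function.uncurry f) (s ×ˢ K)) :
    ContinuousOn (fun p : {F : ProbabilityMeasure X // (F : Measure X) K = 1} × Y =>
      ∫ x, f p.2 x ∂(p.1.1 : Measure X)) (univ ×ˢ s) := by
  have ae_mem (F : {F : ProbabilityMeasure X // (F : Measure X) K = 1}) :
      ∀ᵐ x ∂(F.1 : Measure X), x ∈ K := (mem_ae_iff_prob_eq_one hK.measurableSet).2 F.2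
  have integrable (F : {F : ProbabilityMeasure X // (F : Measure X) K = 1}) {y : Y} (hy : y ∈ s) :
      Integrable (f y) (F.1 : Measure X) :=
    integrable_of_continuousOn_of_ae_mem hK (ae_mem F) (hf.uncurry_left y hy)
  rintro ⟨F₀, y₀⟩ ⟨-, hy₀⟩
  have := isCompact_iff_compactSpace.1 hK
  obtain ⟨g, -, hg⟩ := BoundedContinuousFunction.exists_norm_eq_domRestrict_eq_of_closed
    (.mkOfCompact ⟨K.domRestrict (f y₀), (hf.uncurry_left y₀ hy₀).domRestrict⟩) hK.isClosed
  have hgf : EqOn g (f y₀) K := fun x hx => DFunLike.congr_fun hg ⟨x, hx⟩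
  have h_ext : Tendsto (fun p : {F : ProbabilityMeasure X // (F : Measure X) K = 1} × Y =>
      ∫ x, g x ∂(p.1.1 : Measure X)) (𝓝[univ ×ˢ s] (F₀, y₀)) (𝓝 (∫ x, g x ∂(F₀.1 : Measure X))) :=
    (((ProbabilityMeasure.continuous_integral_boundedContinuousFunction g).comp
      (continuous_subtype_val.comp continuous_fst)).tendsto (F₀, y₀)).mono_left
        nhdsWithin_le_nhds
  have h_diff : Tendsto (fun p : {F : ProbabilityMeasure X // (F : Measure X) K = 1} × Y =>
      ∫ x, (f p.2 x - g x) ∂(p.1.1 : Measure X)) (𝓝[univ ×ˢ s] (F₀, y₀)) (𝓝 0) := by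
    refine Metric.nhds_basis_closedBall.tendsto_right_iff.2 fun ε hε => ?_
    obtain ⟨v, hv, hfv⟩ := hK.mem_uniformity_of_prod hf hy₀ (Metric.dist_mem_uniformity hε)
    have hv' : ∀ᶠ p in 𝓝[univ ×ˢ s] (F₀, y₀), p.2 ∈ v := by
      rw [nhdsWithin_prod_eq]
      exact tendsto_snd.eventually hv
    filter_upwards [hv'] with p hp
    have h_le : ∀ᵐ x ∂(p.1.1 : Measure X), ‖f p.2 x - g x‖ ≤ ε := by
      filter_upwards [ae_mem p.1] with x hx
      rw [hgf hx, ← dist_eq_norm]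
      exact (hfv p.2 hp x hx).le
    simpa using norm_integral_le_of_norm_le_const h_le
  have h_int_g (F : ProbabilityMeasure X) : Integrable g (F : Measure X) := g.integrable _
  have h_eq₀ : ∫ x, g x ∂(F₀.1 : Measure X) = ∫ x, f y₀ x ∂(F₀.1 : Measure X) :=
    integral_congr_ae <| (ae_mem F₀).mono fun _ hx => hgf hx
  rw [ContinuousWithinAt, ← h_eq₀, ← zero_add (∫ x, g x ∂_)]
  refine (h_diff.add h_ext).congr' ?_
  filter_upwards [self_mem_nhdsWithin] with p hp
  rw [integral_sub (integrable p.1 hp.2) (h_int_g _), sub_add_cancel]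

lemma continuousOn_integral_of_isCompact_of_ae_mem [T4Space X] {Y : Type*} [TopologicalSpace Y]
    {s : Set Y} (hK : IsCompact K) {F : Measure X} [hF_prob : IsProbabilityMeasure F]
    (hF : ∀ᵐ x ∂F, x ∈ K) {f : Y → X → ℝ} (hf : ContinuousOn (Function.uncurry f) (s ×ˢ K)) :
    ContinuousOn (fun y => ∫ x, f y x ∂F) s := by
  have hFK : F K = 1 := (mem_ae_iff_prob_eq_one hK.measurableSet).1 hF
  let F' : {F : ProbabilityMeasure X // (F : Measure X) K = 1} :=
    ⟨⟨F, hF_prob⟩, hFK⟩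
  exact (continuousOn_integral_of_isCompact hK hf).comp (f := fun y => (F', y)) (by fun_prop)
    fun _ hy => ⟨mem_univ _, hy⟩

end IntegralOnCompact

section RealAnalysis

lemma continuous_of_forall_exists_le_le_add {X : Type*} [TopologicalSpace X] {f : X → ℝ≥0∞}
    (h : ∀ ε : ℝ≥0, 0 < ε → ∃ g : X → ℝ≥0, Continuous g ∧ ∀ x, g x ≤ f x ∧ f x ≤ g x + ε) :
    Continuous f := by
  obtain ⟨g, -, hg⟩ := h 1 one_pos
  lift f to X → ℝ≥0 using fun x => ne_top_of_le_ne_top (by finiteness) (hg x).2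
  refine ENNReal.continuous_coe.comp (continuous_of_uniform_approx_of_continuous fun u hu => ?_)
  obtain ⟨ε, hε, hεu⟩ := Metric.mem_uniformity_dist.1 hu
  obtain ⟨g, hgc, hg⟩ := h (ε / 2).toNNReal (by simpa using hε)
  refine ⟨g, hgc, fun x => hεu ?_⟩
  have h_lower : g x ≤ f x := ENNReal.coe_le_coe.1 (hg x).1
  have h_upper : f x ≤ g x + (ε / 2).toNNReal := ENNReal.coe_le_coe.1 (hg x).2
  rw [← NNReal.coe_le_coe] at h_lower h_upper
  rw [NNReal.coe_add, Real.coe_toNNReal _ (by positivity)] at h_upper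
  rw [NNReal.dist_eq, abs_of_nonneg (sub_nonneg.2 h_lower)]
  linarith

lemma mul_sub_nonpos_of_isMaxOn_of_supergradient {s : Set ℝ} (hs : Convex ℝ s) {f f' : ℝ → ℝ}
    (hf : ∀ x ∈ s, ∀ y ∈ s, f y ≤ f x + f' x * (y - x)) (hf' : ContinuousOn f' s)
    {x y : ℝ} (hx : x ∈ s) (hy : y ∈ s) (hmax : IsMaxOn f s x) : f' x * (y - x) ≤ 0 := by
  let z : ℝ → ℝ := AffineMap.lineMap x y
  have hz : MapsTo z (Icc 0 1) s := fun θ hθ => hs.lineMap_mem hx hy hθ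
  have hz_nonpos : ∀ θ ∈ Ioc (0 : ℝ) 1, f' (z θ) * (y - x) ≤ 0 := by
    intro θ hθ
    have hzs := hz (Ioc_subset_Icc_self hθ)
    have h_super := hf _ hzs x hx
    have h_max : f (z θ) ≤ f x := hmax hzs
    have h_sub : x - z θ = -(θ * (y - x)) := by simp [z, AffineMap.lineMap_apply]
    rw [h_sub] at h_super
    exact nonpos_of_mul_nonpos_right (a := θ) (by linarith) hθ.1
  have h_lim : Tendsto (fun θ => f' (z θ) * (y - x)) (𝓝[>] 0) (𝓝 (f' x * (y - x))) := by
    have h_cont : ContinuousOn (fun θ => f' (z θ) * (y - x)) (Icc 0 1) :=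
      (hf'.comp (AffineMap.lineMap_continuous.continuousOn) hz).mul_const _
    have h := (h_cont 0 (by simp)).mono_left (nhdsWithin_le_of_mem (Icc_mem_nhdsGT one_pos))
    simpa [z] using h
  exact le_of_tendsto h_lim (mem_of_superset (Ioc_mem_nhdsGT one_pos) hz_nonpos)

end RealAnalysis

section KullbackLeibler

variable {α : Type*} [MeasurableSpace α] {F G : Measure α}

lemma rnDeriv_le_of_le_withDensity [SigmaFinite F] [SigmaFinite G] {w : α → ℝ≥0∞}
    (h : F ≤ G.withDensity w) : F.rnDeriv G ≤ᵐ[G] w := by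
  have hac : F ≪ G := (Measure.absolutelyContinuous_of_le h).trans
    (withDensity_absolutelyContinuous _ _)
  refine ae_le_of_forall_setLIntegral_le_of_sigmaFinite (Measure.measurable_rnDeriv F G)
    fun s hs _ => ?_
  rw [Measure.setLIntegral_rnDeriv hac, ← withDensity_apply _ hs]
  exact h s

variable [IsProbabilityMeasure F] [IsProbabilityMeasure G]

lemma kl_eq_klDiv (F G : Measure ℝ) [IsProbabilityMeasure F] [IsProbabilityMeasure G] :
    KL F G = klDiv F G := by
  rw [KL, klDiv_def]
  simp [llr_def]

-- Gibbs' inequality for `F` against `G.tilted f`.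
theorem ofReal_integral_sub_log_integral_exp_le_klDiv {f : α → ℝ} (hfF : Integrable f F)
    (hfG : Integrable (fun x => Real.exp (f x)) G) :
    ENNReal.ofReal (∫ x, f x ∂F - Real.log (∫ x, Real.exp (f x) ∂G)) ≤ klDiv F G := by
  by_cases h : F ≪ G ∧ Integrable (llr F G) F
  swap
  · rw [← klDiv_ne_top_iff, not_not] at h
    exact h ▸ le_top
  obtain ⟨hac, hllr⟩ := h
  have := isProbabilityMeasure_tilted hfG
  have h_gibbs := integral_llr_add_sub_measure_univ_nonneg
    (hac.trans (absolutelyContinuous_tilted hfG)) (integrable_llr_tilted_right hac hfF hllr hfG)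
  rw [integral_llr_tilted_right hac hfF hfG hllr] at h_gibbs
  rw [klDiv_of_ac_of_integrable hac hllr]
  refine ENNReal.ofReal_le_ofReal ?_
  simp only [probReal_univ] at h_gibbs ⊢
  linarith

theorem klDiv_le_of_le_withDensity {w : α → ℝ}
    (hlog : Integrable (fun x => Real.log (w x)) F)
    (h : F ≤ G.withDensity fun x => ENNReal.ofReal (w x)) :
    klDiv F G ≤ ENNReal.ofReal (∫ x, Real.log (w x) ∂F) := by
  have hac : F ≪ G := (Measure.absolutelyContinuous_of_le h).trans
    (withDensity_absolutelyContinuous _ _)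
  let r : α → ℝ := fun x => (F.rnDeriv G x).toReal
  have hr_meas : Measurable r := (Measure.measurable_rnDeriv F G).ennreal_toReal
  have hr_log : ∀ᵐ x ∂G, 0 < r x → Real.log (r x) ≤ Real.log (w x) := by
    filter_upwards [rnDeriv_le_of_le_withDensity h] with x hx hrx
    refine Real.log_le_log hrx (ENNReal.toReal_le_of_le_ofReal ?_ hx)
    by_contra! hw
    simp [r, nonpos_iff_eq_zero.1 (hx.trans_eq (ENNReal.ofReal_of_nonpos hw.le))] at hrx
  have hllr : Integrable (llr F G) F := by
    rw [← integrable_rnDeriv_mul_log_iff hac]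
    refine integrable_of_le_of_le (g₁ := fun x => r x - 1) (g₂ := fun x => r x * Real.log (w x))
      (hr_meas.mul hr_meas.log).aestronglyMeasurable (ae_of_all _ fun x => ?_) ?_
      (Measure.integrable_toReal_rnDeriv.sub (integrable_const 1))
      ((integrable_rnDeriv_smul_iff hac).2 hlog)
    · have := klFun_nonneg (x := r x) ENNReal.toReal_nonneg
      rw [klFun_apply] at this
      linarith
    · filter_upwards [hr_log] with x hx
      rcases (ENNReal.toReal_nonneg : 0 ≤ r x).eq_or_lt with h0 | hpos
      · simp [← h0, r]
      · exact mul_le_mul_of_nonneg_left (hx hpos) hpos.le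
  rw [klDiv_of_ac_of_integrable hac hllr]
  simp only [probReal_univ, add_sub_cancel_right]
  refine ENNReal.ofReal_le_ofReal (integral_mono_ae hllr hlog ?_)
  filter_upwards [hac hr_log, Measure.rnDeriv_pos hac, hac (Measure.rnDeriv_ne_top F G)]
    with x hx hpos htop using hx (ENNReal.toReal_pos hpos.ne' htop)

end KullbackLeibler

section Reweighting

variable {α : Type*} [MeasurableSpace α] {F : Measure α} {k : α → ℝ} {y : α}

/-- The measure with density `k` with respect to `F`, completed to a probability measure by an
atom at `y` that carries the missing mass. It is meant for `k ≥ 0` with `∫ k dF ≤ 1`. -/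
noncomputable def reweightWithAtom (F : Measure α) (k : α → ℝ) (y : α) : Measure α :=
  F.withDensity (fun x => ENNReal.ofReal (k x)) +
    ENNReal.ofReal (1 - ∫ x, k x ∂F) • Measure.dirac y

lemma isProbabilityMeasure_reweightWithAtom (hk : Integrable k F) (hk0 : 0 ≤ᵐ[F] k)
    (hk1 : ∫ x, k x ∂F ≤ 1) : IsProbabilityMeasure (reweightWithAtom F k y) := by
  refine ⟨?_⟩
  simp only [reweightWithAtom, Measure.add_apply, Measure.smul_apply, measure_univ, smul_eq_mul,
    mul_one, withDensity_apply _ MeasurableSet.univ, Measure.restrict_univ]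
  rw [← ofReal_integral_eq_lintegral_ofReal hk hk0,
    ← ENNReal.ofReal_add (integral_nonneg_of_ae hk0) (sub_nonneg.2 hk1), add_sub_cancel,
    ENNReal.ofReal_one]

lemma ae_reweightWithAtom [MeasurableSingletonClass α] {p : α → Prop} (hF : ∀ᵐ x ∂F, p x)
    (hy : p y) : ∀ᵐ x ∂(reweightWithAtom F k y), p x := by
  rw [reweightWithAtom, ae_add_measure_iff]
  refine ⟨(withDensity_absolutelyContinuous _ _).ae_le hF, Measure.ae_smul_measure ?_ _⟩
  rwa [ae_dirac_eq]

lemma integral_reweightWithAtom [MeasurableSingletonClass α] (hk : AEMeasurable k F)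
    (hk0 : 0 ≤ᵐ[F] k) (hk1 : ∫ x, k x ∂F ≤ 1) {f : α → ℝ}
    (hf : Integrable (fun x => k x * f x) F) :
    ∫ x, f x ∂(reweightWithAtom F k y) = ∫ x, k x * f x ∂F + (1 - ∫ x, k x ∂F) * f y := by
  have hk_top : ∀ᵐ x ∂F, ENNReal.ofReal (k x) < ⊤ := ae_of_all _ fun _ => ENNReal.ofReal_lt_top
  have h_smul : (fun x => (ENNReal.ofReal (k x)).toReal • f x) =ᵐ[F] fun x => k x * f x := by
    filter_upwards [hk0] with x hx
    rw [ENNReal.toReal_ofReal hx, smul_eq_mul]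
  have hf_density : Integrable f (F.withDensity fun x => ENNReal.ofReal (k x)) :=
    (integrable_withDensity_iff_integrable_smul₀' hk.ennreal_ofReal hk_top).2
      (hf.congr h_smul.symm)
  have hf_atom : Integrable f (ENNReal.ofReal (1 - ∫ x, k x ∂F) • Measure.dirac y) :=
    (integrable_dirac (by finiteness)).smul_measure ENNReal.ofReal_ne_top
  rw [reweightWithAtom, integral_add_measure hf_density hf_atom,
    integral_withDensity_eq_integral_toReal_smul₀ hk.ennreal_ofReal hk_top,
    integral_congr_ae h_smul, integral_smul_measure, integral_dirac,
    ENNReal.toReal_ofReal (sub_nonneg.2 hk1), smul_eq_mul]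

lemma le_withDensity_inv_reweightWithAtom (hk : Measurable k) (hk0 : ∀ᵐ x ∂F, 0 < k x) :
    F ≤ (reweightWithAtom F k y).withDensity fun x => ENNReal.ofReal (k x)⁻¹ := by
  have h_inv : (F.withDensity fun x => ENNReal.ofReal (k x)).withDensity
      (fun x => ENNReal.ofReal (k x)⁻¹) = F := by
    have h_congr : (fun x => ENNReal.ofReal (k x)⁻¹)
        =ᵐ[F.withDensity fun x => ENNReal.ofReal (k x)] fun x => (ENNReal.ofReal (k x))⁻¹ :=
      (withDensity_absolutelyContinuous _ _).ae_le
        (hk0.mono fun x hx => ENNReal.ofReal_inv_of_pos hx)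
    rw [withDensity_congr_ae h_congr]
    exact withDensity_inv_same hk.ennreal_ofReal
      (hk0.mono fun x hx => (ENNReal.ofReal_pos.2 hx).ne')
      (ae_of_all _ fun _ => ENNReal.ofReal_ne_top)
  rw [reweightWithAtom, withDensity_add_measure, h_inv]
  exact Measure.le_add_right le_rfl

theorem klDiv_reweightWithAtom_le [IsProbabilityMeasure F] (hk : Measurable k)
    (hk_int : Integrable k F) (hk0 : ∀ᵐ x ∂F, 0 < k x) (hk1 : ∫ x, k x ∂F ≤ 1)
    (hlog : Integrable (fun x => Real.log (k x)) F) :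
    klDiv F (reweightWithAtom F k y) ≤ ENNReal.ofReal (-∫ x, Real.log (k x) ∂F) := by
  have := isProbabilityMeasure_reweightWithAtom (y := y) hk_int (hk0.mono fun _ => le_of_lt) hk1
  have h_log_inv : (fun x => Real.log (k x)⁻¹) = fun x => -Real.log (k x) :=
    funext fun x => Real.log_inv _
  rw [← integral_neg, ← h_log_inv]
  exact klDiv_le_of_le_withDensity (h_log_inv ▸ hlog.neg)
    (le_withDensity_inv_reweightWithAtom hk hk0)

end Reweighting

section Dual

variable {a μ ν T : ℝ} {F : Measure ℝ}

/-- The real-valued version of the dual objective `L(ν; F, μ)`, meaningful for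
`0 ≤ ν < 1 / (1 - μ)`, where the logarithm is bounded on the support of `F`. -/
noncomputable def dualObjective (F : Measure ℝ) (μ ν : ℝ) : ℝ :=
  ∫ x, Real.log (1 - (x - μ) * ν) ∂F

/-- The derivative of `L(ν; F, μ)` with respect to `ν`, in the form of the integral of the
derivative of the integrand. -/
noncomputable def dualDeriv (F : Measure ℝ) (μ ν : ℝ) : ℝ :=
  ∫ x, (μ - x) / (1 - (x - μ) * ν) ∂F

/-- The supremum of `L(ν; F, μ)` over `0 ≤ ν ≤ T`. Taking `T < 1 / (1 - μ)` keeps the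
singularity of the logarithm at `x = 1`, `ν = 1 / (1 - μ)` out of reach. -/
noncomputable def truncatedDual (μ T : ℝ) (F : Measure ℝ) : ℝ :=
  sSup (dualObjective F μ '' Icc 0 T)

lemma one_sub_mul_pos (hμ : μ < 1) (hν : ν ∈ Ico 0 (1 - μ)⁻¹) {x : ℝ} (hx : x ≤ 1) :
    0 < 1 - (x - μ) * ν := by
  have h_lt : ν * (1 - μ) < 1 := by
    rw [← lt_div_iff₀ (sub_pos.2 hμ), one_div]
    exact hν.2
  nlinarith [mul_nonneg hν.1 (sub_nonneg.2 hx)]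

lemma continuousOn_log_one_sub_mul (hμ : μ < 1) :
    ContinuousOn (Function.uncurry fun ν x => Real.log (1 - (x - μ) * ν))
      (Ico 0 (1 - μ)⁻¹ ×ˢ Icc a 1) :=
  ContinuousOn.log (by fun_prop) fun _ hp => (one_sub_mul_pos hμ hp.1 hp.2.2).ne'

lemma continuousOn_sub_div_one_sub_mul (hμ : μ < 1) :
    ContinuousOn (Function.uncurry fun ν x => (μ - x) / (1 - (x - μ) * ν))
      (Ico 0 (1 - μ)⁻¹ ×ˢ Icc a 1) :=
  ContinuousOn.div (by fun_prop) (by fun_prop) fun _ hp => (one_sub_mul_pos hμ hp.1 hp.2.2).ne'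

lemma continuous_truncatedDual (hμ : μ < 1) (hT : T < (1 - μ)⁻¹) :
    Continuous fun F : {G : ProbabilityMeasure ℝ // (G : Measure ℝ) (Icc a 1) = 1} =>
      truncatedDual μ T F.1 := by
  have h_joint : Continuous
      ↿fun (F : {G : ProbabilityMeasure ℝ // (G : Measure ℝ) (Icc a 1) = 1}) (ν : Icc (0 : ℝ) T) =>
        dualObjective F.1 μ ν :=
    (continuousOn_integral_of_isCompact isCompact_Icc
      (continuousOn_log_one_sub_mul hμ)).comp_continuous
        (f := Prod.map id Subtype.val) (by fun_prop)
        fun p => ⟨mem_univ _, p.2.2.1, p.2.2.2.trans_lt hT⟩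
  simp only [truncatedDual, image_eq_range]
  simpa only [image_univ] using isCompact_univ.continuous_sSup h_joint

section IsFiniteMeasure

variable [IsFiniteMeasure F]

lemma integrable_log_one_sub_mul (hμ : μ < 1) (hν : ν ∈ Ico 0 (1 - μ)⁻¹)
    (hF : ∀ᵐ x ∂F, x ∈ Icc a 1) : Integrable (fun x => Real.log (1 - (x - μ) * ν)) F :=
  integrable_of_continuousOn_of_ae_mem isCompact_Icc hF
    ((continuousOn_log_one_sub_mul hμ).uncurry_left ν hν)

lemma integrable_sub_div_one_sub_mul (hμ : μ < 1) (hν : ν ∈ Ico 0 (1 - μ)⁻¹)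
    (hF : ∀ᵐ x ∂F, x ∈ Icc a 1) : Integrable (fun x => (μ - x) / (1 - (x - μ) * ν)) F :=
  integrable_of_continuousOn_of_ae_mem isCompact_Icc hF
    ((continuousOn_sub_div_one_sub_mul hμ).uncurry_left ν hν)

lemma dualObjective_le_add_dualDeriv_mul_sub (hμ : μ < 1) (hF : ∀ᵐ x ∂F, x ∈ Icc a 1)
    {ν ν' : ℝ} (hν : ν ∈ Ico 0 (1 - μ)⁻¹) (hν' : ν' ∈ Ico 0 (1 - μ)⁻¹) :
    dualObjective F μ ν' ≤ dualObjective F μ ν + dualDeriv F μ ν * (ν' - ν) := by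
  have h_log := integrable_log_one_sub_mul hμ hν hF
  have h_div := (integrable_sub_div_one_sub_mul hμ hν hF).mul_const (ν' - ν)
  rw [dualObjective, dualObjective, dualDeriv, ← integral_mul_const, ← integral_add h_log h_div]
  refine integral_mono_ae (integrable_log_one_sub_mul hμ hν' hF) (h_log.add h_div) ?_
  filter_upwards [hF] with x hx
  have hpos := one_sub_mul_pos hμ hν hx.2
  have hpos' := one_sub_mul_pos hμ hν' hx.2
  have h_tangent := Real.log_le_sub_one_of_pos (div_pos hpos' hpos)
  have h_ratio : (1 - (x - μ) * ν') / (1 - (x - μ) * ν) - 1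
      = (μ - x) / (1 - (x - μ) * ν) * (ν' - ν) := by
    field_simp
    ring
  rw [Real.log_div hpos'.ne' hpos.ne', h_ratio] at h_tangent
  linarith

end IsFiniteMeasure

variable [IsProbabilityMeasure F]

lemma continuousOn_dualObjective (hμ : μ < 1) (hF : ∀ᵐ x ∂F, x ∈ Icc a 1) :
    ContinuousOn (dualObjective F μ) (Ico 0 (1 - μ)⁻¹) :=
  continuousOn_integral_of_isCompact_of_ae_mem isCompact_Icc hF (continuousOn_log_one_sub_mul hμ)

lemma continuousOn_dualDeriv (hμ : μ < 1) (hF : ∀ᵐ x ∂F, x ∈ Icc a 1) :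
    ContinuousOn (dualDeriv F μ) (Ico 0 (1 - μ)⁻¹) :=
  continuousOn_integral_of_isCompact_of_ae_mem isCompact_Icc hF
    (continuousOn_sub_div_one_sub_mul hμ)

lemma exists_isMaxOn_truncatedDual_eq (hμ : μ < 1) (hF : ∀ᵐ x ∂F, x ∈ Icc a 1) (hT0 : 0 ≤ T)
    (hT : T < (1 - μ)⁻¹) :
    ∃ ν ∈ Icc 0 T, IsMaxOn (dualObjective F μ) (Icc 0 T) ν ∧
      truncatedDual μ T F = dualObjective F μ ν := by
  obtain ⟨ν, hν, h_sup, hmax⟩ := isCompact_Icc.exists_sSup_image_eq_and_ge (nonempty_Icc.2 hT0)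
    ((continuousOn_dualObjective hμ hF).mono (Icc_subset_Ico_right hT))
  exact ⟨ν, hν, hmax, h_sup⟩

lemma dualDeriv_mul_sub_nonpos (hμ : μ < 1) (hF : ∀ᵐ x ∂F, x ∈ Icc a 1) (hT : T < (1 - μ)⁻¹)
    {ν ν' : ℝ} (hν : ν ∈ Icc 0 T) (hν' : ν' ∈ Icc 0 T)
    (hmax : IsMaxOn (dualObjective F μ) (Icc 0 T) ν) : dualDeriv F μ ν * (ν' - ν) ≤ 0 := by
  have hsub : Icc 0 T ⊆ Ico 0 (1 - μ)⁻¹ := Icc_subset_Ico_right hT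
  exact mul_sub_nonpos_of_isMaxOn_of_supergradient (convex_Icc 0 T)
    (fun x hx y hy => dualObjective_le_add_dualDeriv_mul_sub hμ hF (hsub hx) (hsub hy))
    ((continuousOn_dualDeriv hμ hF).mono hsub) hν hν' hmax

theorem ofReal_dualObjective_le_dinfBdd (hμ : μ < 1) (hν : ν ∈ Ico 0 (1 - μ)⁻¹)
    (hF : ∀ᵐ x ∂F, x ∈ Icc a 1) : ENNReal.ofReal (dualObjective F μ ν) ≤ DinfBdd a F μ := by
  refine le_iInf₂ fun G ⟨_, hG_supp, hG_mean⟩ => ?_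
  have hG : ∀ᵐ x ∂G, x ∈ Icc a 1 := (mem_ae_iff_prob_eq_one measurableSet_Icc).2 hG_supp
  have h_exp_log : (fun x => Real.exp (Real.log (1 - (x - μ) * ν))) =ᵐ[G]
      fun x => 1 - (x - μ) * ν :=
    hG.mono fun x hx => Real.exp_log (one_sub_mul_pos hμ hν hx.2)
  have h_id : Integrable (fun x : ℝ => x) G :=
    integrable_of_continuousOn_of_ae_mem isCompact_Icc hG continuousOn_id
  have h_lin : Integrable (fun x => (x - μ) * ν) G := (h_id.sub (integrable_const μ)).mul_const ν
  have h_int_eq : ∫ x, (1 - (x - μ) * ν) ∂G = 1 - (∫ x, x ∂G - μ) * ν := by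
    rw [integral_sub (integrable_const _) h_lin, integral_mul_const,
      integral_sub h_id (integrable_const _)]
    simp
  have h_int_nonneg : 0 ≤ ∫ x, (1 - (x - μ) * ν) ∂G :=
    integral_nonneg_of_ae (hG.mono fun x hx => (one_sub_mul_pos hμ hν hx.2).le)
  have h_int_le : ∫ x, (1 - (x - μ) * ν) ∂G ≤ 1 := by
    rw [h_int_eq]
    exact sub_le_self _ (mul_nonneg (sub_pos.2 hG_mean).le hν.1)
  calc ENNReal.ofReal (dualObjective F μ ν)
    _ ≤ ENNReal.ofReal (dualObjective F μ ν -
          Real.log (∫ x, Real.exp (Real.log (1 - (x - μ) * ν)) ∂G)) := by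
        rw [integral_congr_ae h_exp_log]
        exact ENNReal.ofReal_le_ofReal
          ((le_sub_self_iff _).2 (Real.log_nonpos h_int_nonneg h_int_le))
    _ ≤ klDiv F G :=
        ofReal_integral_sub_log_integral_exp_le_klDiv (integrable_log_one_sub_mul hμ hν hF)
          (((integrable_const 1).sub h_lin).congr h_exp_log.symm)
    _ = KL F G := (kl_eq_klDiv F G).symm

theorem ofReal_truncatedDual_le_dinfBdd (hμ : μ < 1) (hF : ∀ᵐ x ∂F, x ∈ Icc a 1) (hT0 : 0 ≤ T)
    (hT : T < (1 - μ)⁻¹) : ENNReal.ofReal (truncatedDual μ T F) ≤ DinfBdd a F μ := by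
  obtain ⟨ν, hν, -, h_eq⟩ := exists_isMaxOn_truncatedDual_eq hμ hF hT0 hT
  exact h_eq ▸ ofReal_dualObjective_le_dinfBdd hμ (Icc_subset_Ico_right hT hν) hF

section UpperBound

lemma integral_inv_one_sub_mul (hμ : μ < 1) (hν : ν ∈ Ico 0 (1 - μ)⁻¹)
    (hF : ∀ᵐ x ∂F, x ∈ Icc a 1) :
    ∫ x, (1 - (x - μ) * ν)⁻¹ ∂F = 1 - ν * dualDeriv F μ ν := by
  have h_inv : (fun x => (1 - (x - μ) * ν)⁻¹) =ᵐ[F]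
      fun x => 1 - ν * ((μ - x) / (1 - (x - μ) * ν)) := by
    filter_upwards [hF] with x hx
    have := (one_sub_mul_pos hμ hν hx.2).ne'
    field_simp
    ring
  have h_int := (integrable_sub_div_one_sub_mul hμ hν hF).const_mul ν
  rw [integral_congr_ae h_inv, integral_sub (integrable_const _) h_int, integral_const_mul,
    dualDeriv]
  simp

lemma mul_dualDeriv_le_one (hμ : μ < 1) (hν : ν ∈ Ico 0 (1 - μ)⁻¹)
    (hF : ∀ᵐ x ∂F, x ∈ Icc a 1) : ν * dualDeriv F μ ν ≤ 1 := by
  rw [← sub_nonneg, ← integral_inv_one_sub_mul hμ hν hF]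
  exact integral_nonneg_of_ae (hF.mono fun x hx => inv_nonneg.2 (one_sub_mul_pos hμ hν hx.2).le)

/-- The measure with density `c / (1 - (x - μ)ν)`, completed by an atom at `1`: for `ν` a maximiser
of the dual objective this is the near-optimal competitor in the infimum defining `D_inf`. -/
noncomputable def dualCandidate (F : Measure ℝ) (μ ν c : ℝ) : Measure ℝ :=
  reweightWithAtom F (fun x => c / (1 - (x - μ) * ν)) 1

variable {c : ℝ}

lemma integrable_div_one_sub_mul (hμ : μ < 1) (hν : ν ∈ Ico 0 (1 - μ)⁻¹)
    (hF : ∀ᵐ x ∂F, x ∈ Icc a 1) : Integrable (fun x => c / (1 - (x - μ) * ν)) F :=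
  integrable_of_continuousOn_of_ae_mem isCompact_Icc hF <|
    ContinuousOn.div (by fun_prop) (by fun_prop) fun _ hx => (one_sub_mul_pos hμ hν hx.2).ne'

lemma integral_div_one_sub_mul (hμ : μ < 1) (hν : ν ∈ Ico 0 (1 - μ)⁻¹)
    (hF : ∀ᵐ x ∂F, x ∈ Icc a 1) :
    ∫ x, c / (1 - (x - μ) * ν) ∂F = c * (1 - ν * dualDeriv F μ ν) := by
  simp only [div_eq_mul_inv, integral_const_mul, integral_inv_one_sub_mul hμ hν hF]

lemma integral_sub_dualCandidate (hμ : μ < 1) (hF : ∀ᵐ x ∂F, x ∈ Icc a 1)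
    (hν : ν ∈ Ico 0 (1 - μ)⁻¹) (hc : 0 ≤ c)
    (hmass : ∫ x, c / (1 - (x - μ) * ν) ∂F ≤ 1) :
    ∫ x, (x - μ) ∂(dualCandidate F μ ν c) =
      (1 - μ) * (1 - c) - c * (1 - (1 - μ) * ν) * dualDeriv F μ ν := by
  have h_mul : (fun x => c / (1 - (x - μ) * ν) * (x - μ)) =
      fun x => -c * ((μ - x) / (1 - (x - μ) * ν)) := by
    ext x
    ring
  rw [dualCandidate, integral_reweightWithAtom (by fun_prop)
    (hF.mono fun x hx => div_nonneg hc (one_sub_mul_pos hμ hν hx.2).le) hmass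
    (h_mul ▸ (integrable_sub_div_one_sub_mul hμ hν hF).const_mul (-c)), h_mul, integral_const_mul,
    integral_div_one_sub_mul hμ hν hF, dualDeriv]
  ring

lemma integral_div_one_sub_mul_le_one (hμ : μ < 1) (hF : ∀ᵐ x ∂F, x ∈ Icc a 1)
    (hT : T < (1 - μ)⁻¹) (hν : ν ∈ Icc 0 T) (hmax : IsMaxOn (dualObjective F μ) (Icc 0 T) ν)
    (hc : c ≤ 1) : ∫ x, c / (1 - (x - μ) * ν) ∂F ≤ 1 := by
  have hν' : ν ∈ Ico 0 (1 - μ)⁻¹ := Icc_subset_Ico_right hT hν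
  have h_left := dualDeriv_mul_sub_nonpos hμ hF hT hν (left_mem_Icc.2 (hν.1.trans hν.2)) hmax
  have h_le := mul_dualDeriv_le_one hμ hν' hF
  rw [integral_div_one_sub_mul hμ hν' hF]
  exact mul_le_one₀ hc (by linarith) (by linarith)

lemma integral_sub_dualCandidate_pos (hμ : μ < 1) (hF : ∀ᵐ x ∂F, x ∈ Icc a 1)
    (hT : T < (1 - μ)⁻¹) (hν : ν ∈ Icc 0 T) (hmax : IsMaxOn (dualObjective F μ) (Icc 0 T) ν)
    (hc : 0 < c) (hcT : c < (1 - μ) * T) : 0 < ∫ x, (x - μ) ∂(dualCandidate F μ ν c) := by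
  have hν' : ν ∈ Ico 0 (1 - μ)⁻¹ := Icc_subset_Ico_right hT hν
  have hT0 : 0 ≤ T := hν.1.trans hν.2
  have hT1 := one_sub_mul_pos hμ ⟨hT0, hT⟩ le_rfl
  rw [integral_sub_dualCandidate hμ hF hν' hc.le
    (integral_div_one_sub_mul_le_one hμ hF hT hν hmax (by linarith))]
  set D := dualDeriv F μ ν
  have h_right : D * (T - ν) ≤ 0 :=
    dualDeriv_mul_sub_nonpos hμ hF hT hν (right_mem_Icc.2 hT0) hmax
  have h_slack : 0 ≤ (1 - ν * D) * (1 - (1 - μ) * T) :=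
    mul_nonneg (sub_nonneg.2 (mul_dualDeriv_le_one hμ hν' hF)) hT1.le
  have h_bound : D * T * (1 - (1 - μ) * ν) ≤ 1 - (1 - μ) * T := by linarith
  refine pos_of_mul_pos_right (a := T) ?_ hT0
  calc 0 < (1 - μ) * T - c := sub_pos.2 hcT
    _ = (1 - μ) * T * (1 - c) - c * (1 - (1 - μ) * T) := by ring
    _ ≤ (1 - μ) * T * (1 - c) - c * (D * T * (1 - (1 - μ) * ν)) := by gcongr
    _ = T * ((1 - μ) * (1 - c) - c * (1 - (1 - μ) * ν) * D) := by ring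

lemma dualCandidate_feasible (ha : a ≤ 1) (hμ : μ < 1) (hF : ∀ᵐ x ∂F, x ∈ Icc a 1)
    (hT : T < (1 - μ)⁻¹) (hν : ν ∈ Icc 0 T) (hmax : IsMaxOn (dualObjective F μ) (Icc 0 T) ν)
    (hc : 0 < c) (hcT : c < (1 - μ) * T) :
    IsProbabilityMeasure (dualCandidate F μ ν c) ∧ dualCandidate F μ ν c (Icc a 1) = 1 ∧
      μ < ∫ x, x ∂(dualCandidate F μ ν c) := by
  have hν' : ν ∈ Ico 0 (1 - μ)⁻¹ := Icc_subset_Ico_right hT hν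
  have hc1 : c ≤ 1 := by linarith [one_sub_mul_pos hμ ⟨hν.1.trans hν.2, hT⟩ le_rfl]
  have h_prob : IsProbabilityMeasure (dualCandidate F μ ν c) :=
    isProbabilityMeasure_reweightWithAtom (integrable_div_one_sub_mul hμ hν' hF)
      (hF.mono fun x hx => div_nonneg hc.le (one_sub_mul_pos hμ hν' hx.2).le)
      (integral_div_one_sub_mul_le_one hμ hF hT hν hmax hc1)
  have h_mem : ∀ᵐ x ∂(dualCandidate F μ ν c), x ∈ Icc a 1 :=
    ae_reweightWithAtom hF (right_mem_Icc.2 ha)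
  have h_pos := integral_sub_dualCandidate_pos hμ hF hT hν hmax hc hcT
  have h_id : Integrable (fun x : ℝ => x) (dualCandidate F μ ν c) :=
    integrable_of_continuousOn_of_ae_mem isCompact_Icc h_mem continuousOn_id
  rw [integral_sub h_id (integrable_const μ)] at h_pos
  exact ⟨h_prob, (mem_ae_iff_prob_eq_one measurableSet_Icc).1 h_mem, by simpa using h_pos⟩

lemma klDiv_dualCandidate_le (hμ : μ < 1) (hF : ∀ᵐ x ∂F, x ∈ Icc a 1)
    (hν : ν ∈ Ico 0 (1 - μ)⁻¹) (hc : 0 < c) (hmass : ∫ x, c / (1 - (x - μ) * ν) ∂F ≤ 1) :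
    klDiv F (dualCandidate F μ ν c) ≤
      ENNReal.ofReal (dualObjective F μ ν - Real.log c) := by
  have h_log := integrable_log_one_sub_mul hμ hν hF
  have h_log_div : (fun x => Real.log (c / (1 - (x - μ) * ν))) =ᵐ[F]
      fun x => Real.log c - Real.log (1 - (x - μ) * ν) :=
    hF.mono fun x hx => Real.log_div hc.ne' (one_sub_mul_pos hμ hν hx.2).ne'
  have h_eq : -∫ x, Real.log (c / (1 - (x - μ) * ν)) ∂F = dualObjective F μ ν - Real.log c := by
    rw [integral_congr_ae h_log_div, integral_sub (integrable_const _) h_log, dualObjective]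
    simp
  rw [← h_eq]
  exact klDiv_reweightWithAtom_le (by fun_prop) (integrable_div_one_sub_mul hμ hν hF)
    (hF.mono fun x hx => div_pos hc (one_sub_mul_pos hμ hν hx.2)) hmass
    (((integrable_const _).sub h_log).congr h_log_div.symm)

theorem dinfBdd_le_ofReal_truncatedDual_sub_log (ha : a ≤ 1) (hμ : μ < 1)
    (hF : ∀ᵐ x ∂F, x ∈ Icc a 1) (hT : T < (1 - μ)⁻¹) (hc : 0 < c) (hcT : c < (1 - μ) * T) :
    DinfBdd a F μ ≤ ENNReal.ofReal (truncatedDual μ T F - Real.log c) := by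
  have hT0 : 0 ≤ T := (pos_of_mul_pos_right (hc.trans hcT) (sub_pos.2 hμ).le).le
  have hc1 : c ≤ 1 := by linarith [one_sub_mul_pos hμ ⟨hT0, hT⟩ le_rfl]
  obtain ⟨ν, hν, hmax, h_eq⟩ := exists_isMaxOn_truncatedDual_eq hμ hF hT0 hT
  have h_feasible := dualCandidate_feasible ha hμ hF hT hν hmax hc hcT
  have := h_feasible.1
  calc DinfBdd a F μ
    _ ≤ KL F (dualCandidate F μ ν c) := iInf₂_le (dualCandidate F μ ν c) h_feasible
    _ = klDiv F (dualCandidate F μ ν c) := kl_eq_klDiv _ _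
    _ ≤ ENNReal.ofReal (dualObjective F μ ν - Real.log c) :=
        klDiv_dualCandidate_le hμ hF (Icc_subset_Ico_right hT hν) hc
          (integral_div_one_sub_mul_le_one hμ hF hT hν hmax hc1)
    _ = ENNReal.ofReal (truncatedDual μ T F - Real.log c) := by rw [h_eq]

end UpperBound

end Dual

/-- (Lemma `lem_conti`.) For finite `a < 1` and `μ < 1`, the map
`F ↦ D_inf(F,μ;𝒜_a)` is continuous on the set of probability measures supported in
`[a,1]`, with respect to the topology of weak convergence. -/
theorem stmt9 (a : ℝ) (ha : a < 1) (μ : ℝ) (hμ : μ < 1) :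
    Continuous (fun F : {G : ProbabilityMeasure ℝ // (G : Measure ℝ) (Set.Icc a 1) = 1} =>
      DinfBdd a (F.1 : Measure ℝ) μ) := by
  refine continuous_of_forall_exists_le_le_add fun ε hε => ?_
  set T : ℝ := Real.exp (-ε / 2) * (1 - μ)⁻¹
  have hμ_inv : 0 < (1 - μ)⁻¹ := inv_pos.2 (sub_pos.2 hμ)
  have hT0 : 0 ≤ T := by positivity
  have hT : T < (1 - μ)⁻¹ := mul_lt_of_lt_one_left hμ_inv (by simpa [neg_div] using hε)
  have hcT : Real.exp (-ε) < (1 - μ) * T := by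
    rw [mul_left_comm, mul_inv_cancel₀ (sub_pos.2 hμ).ne', mul_one, Real.exp_lt_exp]
    linarith [NNReal.coe_pos.2 hε]
  refine ⟨fun F => (truncatedDual μ T F.1).toNNReal,
    continuous_real_toNNReal.comp (continuous_truncatedDual hμ hT), fun F => ?_⟩
  have hF : ∀ᵐ x ∂(F.1 : Measure ℝ), x ∈ Icc a 1 :=
    (mem_ae_iff_prob_eq_one measurableSet_Icc).2 F.2
  refine ⟨ofReal_truncatedDual_le_dinfBdd hμ hF hT0 hT, ?_⟩
  calc DinfBdd a F.1 μ
    _ ≤ ENNReal.ofReal (truncatedDual μ T F.1 - Real.log (Real.exp (-ε))) :=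
        dinfBdd_le_ofReal_truncatedDual_sub_log ha.le hμ hF hT (Real.exp_pos _) hcT
    _ = ENNReal.ofReal (truncatedDual μ T F.1 + ε) := by rw [Real.log_exp, sub_neg_eq_add]
    _ ≤ ENNReal.ofReal (truncatedDual μ T F.1) + ENNReal.ofReal ε := ENNReal.ofReal_add_le
    _ = ENNReal.ofReal (truncatedDual μ T F.1) + ε := by rw [ENNReal.ofReal_coe_nnreal]
end

section
/- Let F be a probability measure supported in [0,1], let μ < 1, and let a < 1. Let T_*F denote the pushforward of F under the affine map T(x) = a + (1−a)x, which is supported in [a,1]. Then D̃_inf(T_*F, a+(1−a)μ) = D̃_inf(F, μ). -/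
open MeasureTheory ProbabilityTheory Set Filter
open scoped ENNReal NNReal Classical BoundedContinuousFunction

theorem LL_map_affine (F : Measure ℝ) (b c μ ν : ℝ) :
    LL (F.map (fun x => b + c * x)) (b + c * μ) ν = LL F μ (c * ν) := by
  have hT : Measurable (fun x : ℝ => b + c * x) := by fun_prop
  have hlog : Measurable (fun x : ℝ => Real.log (1 - (x - (b + c * μ)) * ν)) := by fun_prop
  have hneg : MeasurableSet {x : ℝ | 1 - (x - (b + c * μ)) * ν ≤ 0} :=
    measurableSet_le (by fun_prop) measurable_const
  have harg (x : ℝ) : 1 - (b + c * x - (b + c * μ)) * ν = 1 - (x - μ) * (c * ν) := by ring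
  unfold LL
  rw [integrable_map_measure hlog.aestronglyMeasurable hT.aemeasurable,
    integral_map hT.aemeasurable hlog.aestronglyMeasurable, Measure.map_apply hT hneg]
  simp only [Function.comp_def, preimage_ofPred_eq, harg]

theorem stmt18_general (F : Measure ℝ) {μ a : ℝ} (hμ : μ < 1) (ha : a < 1) :
    Dtilde (F.map (fun x => a + (1 - a) * x)) (a + (1 - a) * μ) = Dtilde F μ := by
  have hscale : 0 < 1 - a := sub_pos.2 ha
  have hgap : 0 < 1 - μ := sub_pos.2 hμ
  -- `x ↦ a + (1 - a) * x` fixes `1`, so it rescales the distance from `μ` to `1`.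
  have hgap_map : 1 - (a + (1 - a) * μ) = (1 - a) * (1 - μ) := by ring
  have himage : ((1 - a) * ·) '' Icc 0 ((1 - a) * (1 - μ))⁻¹ = Icc 0 (1 - μ)⁻¹ := by
    rw [image_mul_left_Icc hscale.le (inv_pos.2 (mul_pos hscale hgap)).le, mul_zero, mul_inv,
      mul_inv_cancel_left₀ hscale.ne']
  calc Dtilde (F.map (fun x => a + (1 - a) * x)) (a + (1 - a) * μ)
      = ⨆ ν ∈ Icc 0 ((1 - a) * (1 - μ))⁻¹, LL F μ ((1 - a) * ν) := by
        simp only [Dtilde, LL_map_affine, hgap_map]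
    _ = ⨆ ν ∈ ((1 - a) * ·) '' Icc 0 ((1 - a) * (1 - μ))⁻¹, LL F μ ν := iSup_image.symm
    _ = Dtilde F μ := by rw [himage, Dtilde]

/-- Scale invariance of `D̃_inf`: for `F` supported in `[0,1]`,
`μ < 1`, `a < 1` and `T(x) = a + (1-a)x`,
`D̃_inf(T_*F, a+(1-a)μ) = D̃_inf(F,μ)`. -/
theorem stmt18 (F : Measure ℝ) [IsProbabilityMeasure F] (hF : F (Set.Icc 0 1) = 1)
    (μ a : ℝ) (hμ : μ < 1) (ha : a < 1) :
    Dtilde (Measure.map (fun x => a + (1 - a) * x) F) (a + (1 - a) * μ) = Dtilde F μ :=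
  stmt18_general F hμ ha
end
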